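/- arXiv:0805.2784 — 2 statements merged into one kernel-verified Lean document; each statement's English description precedes it below -/
import Mathlib

section
/- Let u : ℝ³ → ℝ³ be a smooth, compactly supported (or Schwartz) divergence-free vector field and let 3 < p ≤ ∞. Then the trilinear terms arising from the second-order energy estimate satisfy | -2∫_{ℝ³} ∇²u · (∇u · ∇∇u) dx - ∫_{ℝ³} ∇²u ∇²u · ∇u dx | ≤ 5 ‖u‖_{L^p} ‖∇²u‖_{L^{2p/(p-2)}} ‖∇³u‖_{L²}, where the left-hand side integrals are sums over all component and derivative indices. -/
open MeasureTheory Real ENNReal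

/-- `ℝ³` as a Euclidean space. -/
noncomputable abbrev E3 : Type := EuclideanSpace ℝ (Fin 3)

/-- The spatial partial derivative `∂ᵢ f` of a function `f : ℝ³ → F`. -/
noncomputable def pdv {F : Type*} [NormedAddCommGroup F] [NormedSpace ℝ F]
    (i : Fin 3) (f : E3 → F) : E3 → F :=
  fun x => fderiv ℝ f x (EuclideanSpace.single i 1)

/-- The pointwise (ℓ²) norm of the collection `∇²u` of all second-order
partial derivatives of the components of `u`. -/
noncomputable def grad2Norm (u : E3 → E3) (x : E3) : ℝ :=
  Real.sqrt (∑ i, ∑ j, ∑ k, (pdv i (pdv j u) x k) ^ 2)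

/-- The pointwise (ℓ²) norm of the collection `∇³u` of all third-order
partial derivatives of the components of `u`. -/
noncomputable def grad3Norm (u : E3 → E3) (x : E3) : ℝ :=
  Real.sqrt (∑ i, ∑ j, ∑ l, ∑ k, (pdv i (pdv j (pdv l u)) x k) ^ 2)

/-- The Lebesgue exponent `2p/(p-2)`, interpreted as `2` when `p = ∞`. -/
noncomputable def expA (p : ℝ≥0∞) : ℝ≥0∞ :=
  if p = ⊤ then 2 else 2 * p / (p - 2)

/-!
Integrating by parts moves one derivative off the factor `∇u` in each trilinear term. This produces
two unwanted terms, and both vanish by incompressibility: `∫ (u·∇)∂ᵢ∂ⱼu · ∂ᵢ∂ⱼu`, because transport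
by a divergence-free field is skew-symmetric, and the one containing `∇·(∂ᵢ∂ⱼu)`, because `∂ᵢ∂ⱼu` is
again divergence-free. The trilinear expression thus equals
`2 ∫ (u·∇)∂ⱼu · Δ∂ⱼu + ∫ u · (∂ᵢ∂ⱼu·∇)∂ᵢ∂ⱼu`. By Cauchy–Schwarz the two integrands are at most
`√d |u| |∇²u| |∇³u|` and `|u| |∇²u| |∇³u|` in dimension `d`, where `√d` is the cost of the trace in
`Δ`. Hölder's inequality then gives the constant `2√d + 1`, which is below `5` for `d = 3`.
-/

section CauchySchwarz

variable {ι κ : Type*} [Fintype ι] [Fintype κ]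

lemma abs_sum_mul_trace_mul_le (u : ι → ℝ) (a : ι → κ → ℝ) (T : ι → ι → κ → ℝ) :
    |∑ i, ∑ q, ∑ l, u l * T i i q * a l q| ≤
      √(Fintype.card ι) *
        (√(∑ l, u l ^ 2) * √(∑ l, ∑ q, a l q ^ 2) * √(∑ i, ∑ j, ∑ q, T i j q ^ 2)) := by
  have contraction_le : ∑ q, (∑ l, u l * a l q) ^ 2 ≤ (∑ l, u l ^ 2) * ∑ l, ∑ q, a l q ^ 2 := by
    rw [Finset.sum_comm (f := fun l q => a l q ^ 2), Finset.mul_sum]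
    exact Finset.sum_le_sum fun q _ => Finset.sum_mul_sq_le_sq_mul_sq _ _ _
  have diagonal_le : ∑ i, ∑ q, T i i q ^ 2 ≤ ∑ i, ∑ j, ∑ q, T i j q ^ 2 :=
    Finset.sum_le_sum fun i _ => Finset.single_le_sum (f := fun j => ∑ q, T i j q ^ 2)
      (fun j _ => by positivity) (Finset.mem_univ i)
  have cauchySchwarz := Finset.sum_mul_sq_le_sq_mul_sq (Finset.univ : Finset (ι × κ))
    (fun r => ∑ l, u l * a l r.2) (fun r => T r.1 r.1 r.2)
  simp only [Fintype.sum_prod_type, Finset.sum_const, Finset.card_univ, nsmul_eq_mul]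
    at cauchySchwarz
  rw [← Real.sqrt_mul (by positivity), ← Real.sqrt_mul (by positivity),
    ← Real.sqrt_mul (by positivity)]
  apply Real.abs_le_sqrt
  calc (∑ i, ∑ q, ∑ l, u l * T i i q * a l q) ^ 2
      = (∑ i, ∑ q, (∑ l, u l * a l q) * T i i q) ^ 2 := by
        simp only [Finset.sum_mul, mul_right_comm]
    _ ≤ Fintype.card ι * (∑ q, (∑ l, u l * a l q) ^ 2) * ∑ i, ∑ q, T i i q ^ 2 := cauchySchwarz
    _ ≤ Fintype.card ι * ((∑ l, u l ^ 2) * ∑ l, ∑ q, a l q ^ 2) *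
          ∑ i, ∑ j, ∑ q, T i j q ^ 2 := by gcongr
    _ = _ := mul_assoc _ _ _

lemma abs_sum_mul_mul_le (u : ι → ℝ) (a : κ → ι → ℝ) (T : ι → κ → ι → ℝ) :
    |∑ q, ∑ k, ∑ l, u k * a q l * T l q k| ≤
      √(∑ k, u k ^ 2) * √(∑ q, ∑ l, a q l ^ 2) * √(∑ l, ∑ q, ∑ k, T l q k ^ 2) := by
  have cauchySchwarz := Finset.sum_mul_sq_le_sq_mul_sq (Finset.univ : Finset (κ × ι × ι))
    (fun r => u r.2.1 * a r.1 r.2.2) (fun r => T r.2.2 r.1 r.2.1)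
  simp only [Fintype.sum_prod_type, mul_pow, ← Finset.mul_sum, ← Finset.sum_mul] at cauchySchwarz
  have reorder : ∑ q, ∑ k, ∑ l, T l q k ^ 2 = ∑ l, ∑ q, ∑ k, T l q k ^ 2 := by
    rw [Finset.sum_comm (s := (Finset.univ : Finset ι))]
    exact Finset.sum_congr rfl fun q _ => Finset.sum_comm
  rw [← Real.sqrt_mul (by positivity), ← Real.sqrt_mul (by positivity), ← reorder]
  exact Real.abs_le_sqrt cauchySchwarz

end CauchySchwarz

section Integration

variable {α : Type*} [MeasurableSpace α] {μ : Measure α}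

lemma integral_sum_sum_sum_sum {ι : Type*} [Fintype ι] {G : ι → ι → ι → ι → α → ℝ}
    (hG : ∀ i j k l, Integrable (G i j k l) μ) :
    ∫ x, ∑ i, ∑ j, ∑ k, ∑ l, G i j k l x ∂μ = ∑ i, ∑ j, ∑ k, ∑ l, ∫ x, G i j k l x ∂μ := by
  simpa only [Fintype.sum_prod_type] using
    integral_finsetSum (Finset.univ : Finset (ι × ι × ι × ι))
      (f := fun q => G q.1 q.2.1 q.2.2.1 q.2.2.2) fun q _ => hG _ _ _ _

lemma integral_norm_mul_mul_le_eLpNorm {f g h : α → ℝ} {p q r s : ℝ≥0∞}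
    [HolderTriple p q r] [HolderConjugate r s]
    (hf : MemLp f p μ) (hg : MemLp g q μ) (hh : MemLp h s μ) :
    ∫ x, ‖f x * g x * h x‖ ∂μ ≤
      (eLpNorm f p μ).toReal * (eLpNorm g q μ).toReal * (eLpNorm h s μ).toReal := by
  have holder : eLpNorm ((f • g) • h) 1 μ ≤ eLpNorm f p μ * eLpNorm g q μ * eLpNorm h s μ :=
    calc eLpNorm ((f • g) • h) 1 μ
        ≤ eLpNorm (f • g) r μ * eLpNorm h s μ :=
          eLpNorm_smul_le_mul_eLpNorm hh.1 (hf.1.smul hg.1)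
      _ ≤ eLpNorm f p μ * eLpNorm g q μ * eLpNorm h s μ := by
          gcongr
          exact eLpNorm_smul_le_mul_eLpNorm hg.1 hf.1
  rw [← ENNReal.toReal_mul, ← ENNReal.toReal_mul,
    integral_norm_eq_lintegral_enorm (f := fun x => f x * g x * h x) ((hf.1.mul hg.1).mul hh.1),
    ← eLpNorm_one_eq_lintegral_enorm]
  exact ENNReal.toReal_mono (ENNReal.mul_ne_top (ENNReal.mul_ne_top hf.2.ne hg.2.ne) hh.2.ne) holder

end Integration

lemma holderTriple_expA {p : ℝ≥0∞} (hp : 2 ≤ p) : HolderTriple p (expA p) 2 := by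
  constructor
  unfold expA
  split_ifs with h
  · simp [h]
  · have hp0 : p ≠ 0 := (two_pos.trans_le hp).ne'
    calc p⁻¹ + (2 * p / (p - 2))⁻¹
        = 2 / (2 * p) + (p - 2) / (2 * p) := by
          rw [ENNReal.inv_div (by simp [h]) (by simp [hp0]), ← one_div p,
            ← ENNReal.mul_div_mul_left 1 p two_ne_zero ofNat_ne_top, mul_one]
      _ = p / (2 * p) := by rw [← ENNReal.add_div, add_tsub_cancel_of_le hp]
      _ = 2⁻¹ := by
          rw [← one_div 2, ← ENNReal.mul_div_mul_right 1 2 hp0 h, one_mul]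

/-- `f ∈ C_c^n`: the function `f` is `n` times continuously differentiable with compact support. -/
structure ContDiffCc {E F : Type*} [NormedAddCommGroup E] [NormedSpace ℝ E]
    [NormedAddCommGroup F] [NormedSpace ℝ F] (n : ℕ) (f : E → F) : Prop where
  contDiff : ContDiff ℝ n f
  hasCompactSupport : HasCompactSupport f

namespace ContDiffCc

variable {E F : Type*} [NormedAddCommGroup E] [NormedSpace ℝ E]
  [NormedAddCommGroup F] [NormedSpace ℝ F] {m n : ℕ}

lemma of_le {f : E → F} (hf : ContDiffCc n f) (hmn : m ≤ n) : ContDiffCc m f :=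
  ⟨hf.contDiff.of_le (mod_cast hmn), hf.hasCompactSupport⟩

lemma differentiable {f : E → F} (hf : ContDiffCc (n + 1) f) : Differentiable ℝ f :=
  hf.contDiff.differentiable (by simp)

lemma norm {f : E → F} (hf : ContDiffCc n f) : ContDiffCc 0 fun x => ‖f x‖ :=
  ⟨contDiff_zero.2 hf.contDiff.continuous.norm, hf.hasCompactSupport.norm⟩

lemma mul {f g : E → ℝ} (hf : ContDiffCc n f) (hg : ContDiffCc n g) :
    ContDiffCc n fun x => f x * g x :=
  ⟨hf.contDiff.mul hg.contDiff, hf.hasCompactSupport.mul_right⟩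

lemma sq {f : E → ℝ} (hf : ContDiffCc n f) : ContDiffCc n fun x => f x ^ 2 := by
  simpa only [pow_two] using hf.mul hf

lemma sum {ι : Type*} [Fintype ι] {f : ι → E → F} (hf : ∀ i, ContDiffCc n (f i)) :
    ContDiffCc n fun x => ∑ i, f i x where
  contDiff := ContDiff.sum fun i _ => (hf i).contDiff
  hasCompactSupport := by
    simpa only [Finset.sum_fn] using
      HasCompactSupport.finset_sum fun i (_ : i ∈ Finset.univ) => (hf i).hasCompactSupport

lemma sqrt {f : E → ℝ} (hf : ContDiffCc n f) : ContDiffCc 0 fun x => √(f x) :=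
  ⟨contDiff_zero.2 hf.contDiff.continuous.sqrt,
    hf.hasCompactSupport.comp_left Real.sqrt_zero⟩

lemma apply {ι : Type*} [Fintype ι] {v : E → EuclideanSpace ℝ ι} (hv : ContDiffCc n v) (k : ι) :
    ContDiffCc n fun x => v x k :=
  ⟨contDiff_euclidean.1 hv.contDiff k,
    hv.hasCompactSupport.comp_left (g := fun w : EuclideanSpace ℝ ι => w k) rfl⟩

variable [MeasurableSpace E] [OpensMeasurableSpace E] {μ : Measure E}
  [IsFiniteMeasureOnCompacts μ]

lemma integrable {f : E → F} (hf : ContDiffCc n f) : Integrable f μ :=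
  hf.contDiff.continuous.integrable_of_hasCompactSupport hf.hasCompactSupport

lemma memLp [SecondCountableTopologyEither E F] {f : E → F} (hf : ContDiffCc n f) (p : ℝ≥0∞) :
    MemLp f p μ :=
  hf.contDiff.continuous.memLp_of_hasCompactSupport hf.hasCompactSupport

end ContDiffCc

section PartialDeriv

variable {ι : Type*} [DecidableEq ι] {F : Type*} [NormedAddCommGroup F] [NormedSpace ℝ F]

/-- The partial derivative `∂ᵢ f` of a function on `ℝ^ι`, written `∂[i] f`; for `ι = Fin 3` it is
definitionally `pdv i f`. -/
noncomputable def partialDeriv (i : ι) (f : EuclideanSpace ℝ ι → F) : EuclideanSpace ℝ ι → F :=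
  fun x => fderiv ℝ f x (EuclideanSpace.single i 1)

local notation:max "∂[" i "]" => partialDeriv i

section Finite

variable [Finite ι]

lemma partialDeriv_apply {κ : Type*} [Fintype κ] {v : EuclideanSpace ℝ ι → EuclideanSpace ℝ κ}
    (hv : Differentiable ℝ v) (i : ι) (k : κ) :
    ∂[i] (fun x => v x k) = fun x => ∂[i] v x k := by
  have := Fintype.ofFinite ι
  ext x
  have hcomp := (EuclideanSpace.proj (𝕜 := ℝ) k).hasFDerivAt.comp x (hv x).hasFDerivAt
  exact DFunLike.congr_fun hcomp.fderiv (EuclideanSpace.single i 1)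

lemma partialDeriv_mul {f g : EuclideanSpace ℝ ι → ℝ} (hf : Differentiable ℝ f)
    (hg : Differentiable ℝ g) (i : ι) (x : EuclideanSpace ℝ ι) :
    ∂[i] (fun y => f y * g y) x = f x * ∂[i] g x + g x * ∂[i] f x := by
  have := Fintype.ofFinite ι
  simp [partialDeriv, fderiv_fun_mul (hf x) (hg x)]

lemma partialDeriv_sum {κ : Type*} [Fintype κ] {f : κ → EuclideanSpace ℝ ι → F}
    (hf : ∀ l, Differentiable ℝ (f l)) (i : ι) (x : EuclideanSpace ℝ ι) :
    ∂[i] (fun y => ∑ l, f l y) x = ∑ l, ∂[i] (f l) x := by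
  have := Fintype.ofFinite ι
  simp [partialDeriv, fderiv_fun_sum fun l _ => hf l x]

end Finite

variable [Fintype ι]

lemma ContDiffCc.partialDeriv {n : ℕ} {f : EuclideanSpace ℝ ι → F} (hf : ContDiffCc (n + 1) f)
    (i : ι) : ContDiffCc n (∂[i] f) :=
  ⟨(hf.contDiff.fderiv_right le_rfl).clm_apply contDiff_const,
    hf.hasCompactSupport.fderiv_apply ℝ _⟩

lemma partialDeriv_partialDeriv_eq_fderiv_fderiv {f : EuclideanSpace ℝ ι → F}
    (hf : ContDiff ℝ 2 f) (i j : ι) (x : EuclideanSpace ℝ ι) :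
    ∂[i] (∂[j] f) x =
      fderiv ℝ (fderiv ℝ f) x (EuclideanSpace.single i 1) (EuclideanSpace.single j 1) := by
  have hf' : Differentiable ℝ (fderiv ℝ f) :=
    (hf.fderiv_right (m := 1) (by norm_num)).differentiable one_ne_zero
  change fderiv ℝ (fun y => fderiv ℝ f y (EuclideanSpace.single j 1)) x _ = _
  simp [fderiv_clm_apply (hf' x) (differentiableAt_const _)]

lemma partialDeriv_comm {f : EuclideanSpace ℝ ι → F} (hf : ContDiff ℝ 2 f) (i j : ι) :
    ∂[i] (∂[j] f) = ∂[j] (∂[i] f) := by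
  ext x
  rw [partialDeriv_partialDeriv_eq_fderiv_fderiv hf, partialDeriv_partialDeriv_eq_fderiv_fderiv hf]
  exact hf.contDiffAt.isSymmSndFDerivAt (by simp) _ _

lemma integral_mul_partialDeriv_mul {f g h : EuclideanSpace ℝ ι → ℝ} (hf : ContDiffCc 1 f)
    (hg : ContDiffCc 1 g) (hh : ContDiffCc 1 h) (i : ι) :
    ∫ x, f x * ∂[i] g x * h x =
      -(∫ x, g x * ∂[i] f x * h x) - ∫ x, g x * f x * ∂[i] h x := by
  have hfh := hf.mul hh
  have lower {φ : EuclideanSpace ℝ ι → ℝ} (hφ : ContDiffCc 1 φ) := hφ.of_le zero_le_one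
  calc ∫ x, f x * ∂[i] g x * h x
      = ∫ x, f x * h x * ∂[i] g x := by simp only [mul_right_comm]
    _ = -∫ x, ∂[i] (fun y => f y * h y) x * g x :=
        integral_mul_fderiv_eq_neg_fderiv_mul_of_integrable
          ((hfh.partialDeriv i).mul (lower hg)).integrable
          ((lower hfh).mul (hg.partialDeriv i)).integrable (hfh.mul hg).integrable
          (fun x _ => hfh.differentiable x) (fun x _ => hg.differentiable x)
    _ = -∫ x, (g x * ∂[i] f x * h x + g x * f x * ∂[i] h x) := by
        congr! 3 with x
        rw [partialDeriv_mul hf.differentiable hh.differentiable]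
        ring
    _ = _ := by
        rw [integral_add (((lower hg).mul (hf.partialDeriv i)).mul (lower hh)).integrable
          (((lower hg).mul (lower hf)).mul (hh.partialDeriv i)).integrable, neg_add']

/-- The vector field `v` is divergence-free, `∇ · v = 0`. The derivative is taken before the
component, as in the expression `pdv i v x i`. -/
def IsDivFree (v : EuclideanSpace ℝ ι → EuclideanSpace ℝ ι) : Prop :=
  ∀ x, ∑ i, ∂[i] v x i = 0

lemma IsDivFree.partialDeriv {v : EuclideanSpace ℝ ι → EuclideanSpace ℝ ι} (hdiv : IsDivFree v)
    (hv : ContDiffCc 2 v) (j : ι) : IsDivFree (∂[j] v) := by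
  intro x
  have hdv (i : ι) : Differentiable ℝ (∂[i] v) := (hv.partialDeriv i).differentiable
  calc ∑ i, ∂[i] (∂[j] v) x i
      = ∑ i, ∂[j] (fun y => ∂[i] v y i) x := by
        simp only [partialDeriv_apply (hdv _), partialDeriv_comm hv.contDiff j]
    _ = ∂[j] (fun y => ∑ i, ∂[i] v y i) x :=
        (partialDeriv_sum (fun i => differentiable_euclidean.1 (hdv i) i) j x).symm
    _ = 0 := by
        rw [funext hdiv]
        simp [_root_.partialDeriv]

lemma IsDivFree.sum_integral_mul_partialDeriv_eq_neg
    {v : EuclideanSpace ℝ ι → EuclideanSpace ℝ ι} (hdiv : IsDivFree v) (hv : ContDiffCc 1 v)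
    {f g : EuclideanSpace ℝ ι → ℝ} (hf : ContDiffCc 1 f) (hg : ContDiffCc 1 g) :
    ∑ l, ∫ x, f x * v x l * ∂[l] g x = -∑ l, ∫ x, g x * v x l * ∂[l] f x := by
  have divergence_term : ∑ l, ∫ x, f x * ∂[l] v x l * g x = 0 := by
    rw [← integral_finsetSum _ fun l _ => (((hf.of_le zero_le_one).mul
      ((hv.partialDeriv l).apply l)).mul (hg.of_le zero_le_one)).integrable]
    simp only [← Finset.sum_mul, ← Finset.mul_sum, hdiv _, mul_zero, zero_mul, integral_zero]
  have by_parts (l : ι) : ∫ x, f x * ∂[l] v x l * g x =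
      -(∫ x, g x * v x l * ∂[l] f x) - ∫ x, f x * v x l * ∂[l] g x := by
    have h := integral_mul_partialDeriv_mul hf (hv.apply l) hg l
    simp only [partialDeriv_apply hv.differentiable] at h
    rw [h]
    congr! 4 <;> ring
  simp only [by_parts, Finset.sum_sub_distrib, Finset.sum_neg_distrib] at divergence_term
  linarith

lemma IsDivFree.sum_integral_partialDeriv_mul_partialDeriv_mul
    {v : EuclideanSpace ℝ ι → EuclideanSpace ℝ ι} (hdiv : IsDivFree v) (hv : ContDiffCc 1 v)
    {f : EuclideanSpace ℝ ι → ℝ} (hf : ContDiffCc 2 f) (i : ι) :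
    ∑ l, ∫ x, ∂[i] f x * ∂[i] v x l * ∂[l] f x =
      -∑ l, ∫ x, v x l * ∂[i] (∂[i] f) x * ∂[l] f x := by
  have transport_self : ∑ l, ∫ x, ∂[i] f x * v x l * ∂[l] (∂[i] f) x = 0 := by
    linarith [hdiv.sum_integral_mul_partialDeriv_eq_neg hv (hf.partialDeriv i) (hf.partialDeriv i)]
  have by_parts (l : ι) : ∫ x, ∂[i] f x * ∂[i] v x l * ∂[l] f x =
      -(∫ x, v x l * ∂[i] (∂[i] f) x * ∂[l] f x) - ∫ x, ∂[i] f x * v x l * ∂[l] (∂[i] f) x := by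
    have h := integral_mul_partialDeriv_mul (hf.partialDeriv i) (hv.apply l) (hf.partialDeriv l) i
    simp only [partialDeriv_apply hv.differentiable] at h
    rw [h, partialDeriv_comm hf.contDiff i l]
    simp only [mul_comm (v _ l) (∂[i] f _)]
  simp only [by_parts, Finset.sum_sub_distrib, Finset.sum_neg_distrib, transport_self, sub_zero]

/-- The pointwise `ℓ²` norm of `∇²u`; for `ι = Fin 3` it is definitionally `grad2Norm u`. -/
noncomputable def secondDerivNorm (u : EuclideanSpace ℝ ι → EuclideanSpace ℝ ι)
    (x : EuclideanSpace ℝ ι) : ℝ :=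
  √(∑ i, ∑ j, ∑ k, (∂[i] (∂[j] u) x k) ^ 2)

/-- The pointwise `ℓ²` norm of `∇³u`; for `ι = Fin 3` it is definitionally `grad3Norm u`. -/
noncomputable def thirdDerivNorm (u : EuclideanSpace ℝ ι → EuclideanSpace ℝ ι)
    (x : EuclideanSpace ℝ ι) : ℝ :=
  √(∑ i, ∑ j, ∑ l, ∑ k, (∂[i] (∂[j] (∂[l] u)) x k) ^ 2)

variable {u : EuclideanSpace ℝ ι → EuclideanSpace ℝ ι}

lemma ContDiffCc.secondDerivNorm (hu : ContDiffCc 2 u) : ContDiffCc 0 (secondDerivNorm u) :=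
  (sum fun i => sum fun j => sum fun k => (((hu.partialDeriv j).partialDeriv i).apply k).sq).sqrt

lemma ContDiffCc.thirdDerivNorm (hu : ContDiffCc 3 u) : ContDiffCc 0 (thirdDerivNorm u) :=
  (sum fun i => sum fun j => sum fun l => sum fun k =>
    ((((hu.partialDeriv l).partialDeriv j).partialDeriv i).apply k).sq).sqrt

lemma abs_integral_le_of_abs_le_derivNorms {p q r s : ℝ≥0∞} [HolderTriple p q r]
    [HolderConjugate r s] (hu : ContDiffCc 3 u) {G : EuclideanSpace ℝ ι → ℝ} {C : ℝ} (hC : 0 ≤ C)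
    (hG : ∀ x, |G x| ≤ C * (‖u x‖ * secondDerivNorm u x * thirdDerivNorm u x)) :
    |∫ x, G x| ≤ C * ((eLpNorm u p volume).toReal *
      (eLpNorm (secondDerivNorm u) q volume).toReal *
      (eLpNorm (thirdDerivNorm u) s volume).toReal) := by
  have hu₂ : ContDiffCc 2 u := hu.of_le (by norm_num)
  have hbound := (hu.norm.mul hu₂.secondDerivNorm).mul hu.thirdDerivNorm
  have holder : ∫ x, ‖‖u x‖ * secondDerivNorm u x * thirdDerivNorm u x‖ ≤ _ :=
    integral_norm_mul_mul_le_eLpNorm (r := r) (hu.norm.memLp p)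
      (hu₂.secondDerivNorm.memLp q) (hu.thirdDerivNorm.memLp s)
  rw [eLpNorm_norm u] at holder
  calc |∫ x, G x|
      ≤ ∫ x, C * ‖‖u x‖ * secondDerivNorm u x * thirdDerivNorm u x‖ :=
        norm_integral_le_of_norm_le (f := G) (hbound.integrable.norm.const_mul C) <|
          .of_forall fun x => (hG x).trans <| mul_le_mul_of_nonneg_left (le_abs_self _) hC
    _ = C * ∫ x, ‖‖u x‖ * secondDerivNorm u x * thirdDerivNorm u x‖ := integral_const_mul _ _
    _ ≤ _ := mul_le_mul_of_nonneg_left holder hC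

lemma abs_sum_mul_laplacian_mul_le_derivNorms (x : EuclideanSpace ℝ ι) :
    |∑ i, ∑ j, ∑ k, ∑ l, u x l * ∂[i] (∂[i] (∂[j] u)) x k * ∂[l] (∂[j] u) x k| ≤
      √(Fintype.card ι) * (‖u x‖ * secondDerivNorm u x * thirdDerivNorm u x) := by
  simpa only [Fintype.sum_prod_type, secondDerivNorm, thirdDerivNorm, EuclideanSpace.norm_eq,
    Real.norm_eq_abs, sq_abs] using
    abs_sum_mul_trace_mul_le (κ := ι × ι) (u x).ofLp (fun l q => ∂[l] (∂[q.1] u) x q.2)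
      (fun i j q => ∂[i] (∂[j] (∂[q.1] u)) x q.2)

lemma abs_sum_mul_mul_le_derivNorms (x : EuclideanSpace ℝ ι) :
    |∑ i, ∑ j, ∑ k, ∑ l, u x k * ∂[i] (∂[j] u) x l * ∂[l] (∂[i] (∂[j] u)) x k| ≤
      ‖u x‖ * secondDerivNorm u x * thirdDerivNorm u x := by
  simpa only [Fintype.sum_prod_type, secondDerivNorm, thirdDerivNorm, EuclideanSpace.norm_eq,
    Real.norm_eq_abs, sq_abs] using
    abs_sum_mul_mul_le (κ := ι × ι) (u x).ofLp (fun q l => ∂[q.1] (∂[q.2] u) x l)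
      (fun l q k => ∂[l] (∂[q.1] (∂[q.2] u)) x k)

lemma sum_integral_hess_mul_grad_mul_hess (hu : ContDiffCc 3 u) (hdiv : IsDivFree u) :
    ∑ i, ∑ j, ∑ k, ∑ l, ∫ x, ∂[i] (∂[j] u) x k * ∂[i] u x l * ∂[l] (∂[j] u) x k =
      -∫ x, ∑ i, ∑ j, ∑ k, ∑ l, u x l * ∂[i] (∂[i] (∂[j] u)) x k * ∂[l] (∂[j] u) x k := by
  have hd₁ (j : ι) : ContDiffCc 2 (∂[j] u) := hu.partialDeriv j
  have hd₂ (i j : ι) : ContDiffCc 1 (∂[i] (∂[j] u)) := (hd₁ j).partialDeriv i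
  rw [integral_sum_sum_sum_sum fun i j k l => ((((hu.of_le zero_le).apply l).mul
    (((hd₂ i j).partialDeriv i).apply k)).mul
      (((hd₂ l j).of_le zero_le_one).apply k)).integrable]
  simp only [← Finset.sum_neg_distrib (s := Finset.univ)]
  congr! 3 with i _ j _ k _
  rw [Finset.sum_neg_distrib]
  have h := hdiv.sum_integral_partialDeriv_mul_partialDeriv_mul (hu.of_le (by norm_num))
    ((hd₁ j).apply k) i
  simpa only [partialDeriv_apply (hd₁ _).differentiable,
    partialDeriv_apply (hd₂ _ _).differentiable] using h

lemma sum_integral_hess_mul_hess_mul_grad (hu : ContDiffCc 3 u) (hdiv : IsDivFree u) :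
    ∑ i, ∑ j, ∑ k, ∑ l, ∫ x, ∂[i] (∂[j] u) x k * ∂[i] (∂[j] u) x l * ∂[l] u x k =
      -∫ x, ∑ i, ∑ j, ∑ k, ∑ l, u x k * ∂[i] (∂[j] u) x l * ∂[l] (∂[i] (∂[j] u)) x k := by
  have hd₁ (j : ι) : ContDiffCc 2 (∂[j] u) := hu.partialDeriv j
  have hd₂ (i j : ι) : ContDiffCc 1 (∂[i] (∂[j] u)) := (hd₁ j).partialDeriv i
  rw [integral_sum_sum_sum_sum fun i j k l => ((((hu.of_le zero_le).apply k).mul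
    (((hd₂ i j).of_le zero_le_one).apply l)).mul
      (((hd₂ i j).partialDeriv l).apply k)).integrable]
  simp only [← Finset.sum_neg_distrib (s := Finset.univ)]
  congr! 3 with i _ j _ k _
  rw [Finset.sum_neg_distrib]
  have hdiv_hess : IsDivFree (∂[i] (∂[j] u)) :=
    (hdiv.partialDeriv (hu.of_le (by norm_num)) j).partialDeriv (hd₁ j) i
  have h := hdiv_hess.sum_integral_mul_partialDeriv_eq_neg (hd₂ i j) ((hd₂ i j).apply k)
    ((hu.of_le (m := 1) (by norm_num)).apply k)
  simpa only [partialDeriv_apply hu.differentiable, partialDeriv_apply (hd₂ _ _).differentiable]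
    using h

theorem trilinear_estimate_general (hsmooth : ContDiff ℝ 3 u) (hsupp : HasCompactSupport u)
    (hdiv : IsDivFree u) (p q r s : ℝ≥0∞) [HolderTriple p q r] [HolderConjugate r s] :
    |(-2 : ℝ) * (∑ i, ∑ j, ∑ k, ∑ l,
        ∫ x, ∂[i] (∂[j] u) x k * ∂[i] u x l * ∂[l] (∂[j] u) x k)
      - ∑ i, ∑ j, ∑ k, ∑ l,
        ∫ x, ∂[i] (∂[j] u) x k * ∂[i] (∂[j] u) x l * ∂[l] u x k|
    ≤ (2 * √(Fintype.card ι) + 1) * (eLpNorm u p volume).toReal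
        * (eLpNorm (secondDerivNorm u) q volume).toReal
        * (eLpNorm (thirdDerivNorm u) s volume).toReal := by
  have hu : ContDiffCc 3 u := ⟨hsmooth, hsupp⟩
  rw [sum_integral_hess_mul_grad_mul_hess hu hdiv, sum_integral_hess_mul_hess_mul_grad hu hdiv,
    neg_mul_neg, sub_neg_eq_add]
  have laplacian_term := abs_integral_le_of_abs_le_derivNorms (p := p) (q := q) (r := r) (s := s)
    hu (Real.sqrt_nonneg _) abs_sum_mul_laplacian_mul_le_derivNorms
  have transport_term := abs_integral_le_of_abs_le_derivNorms (p := p) (q := q) (r := r) (s := s)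
    hu zero_le_one fun x => (abs_sum_mul_mul_le_derivNorms x).trans_eq (one_mul _).symm
  refine (abs_add_le _ _).trans ?_
  rw [abs_mul, abs_two]
  linarith

end PartialDeriv

/-- **The trilinear estimate from the second-order energy estimate.**
For a smooth, compactly supported, divergence-free vector field `u` on `ℝ³` and
`3 < p ≤ ∞`, the trilinear terms satisfy
`| -2∫ ∇²u (∇u·∇∇u) dx - ∫ ∇²u ∇²u·∇u dx |
   ≤ 5 ‖u‖_{L^p} ‖∇²u‖_{L^{2p/(p-2)}} ‖∇³u‖_{L²}`,
the integrals on the left being sums over all component and derivative indices. -/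
theorem trilinear_estimate
    (u : E3 → E3)
    (hsmooth : ContDiff ℝ (⊤ : ℕ∞) u)
    (hsupp : HasCompactSupport u)
    (hdiv : ∀ x : E3, ∑ i, pdv i u x i = 0)
    (p : ℝ≥0∞) (hp : 3 < p) :
    |(-2 : ℝ) * (∑ i, ∑ j, ∑ k, ∑ l,
        ∫ x : E3, (pdv i (pdv j u) x k) * (pdv i u x l) * (pdv l (pdv j u) x k))
      - (∑ i, ∑ j, ∑ k, ∑ l,
        ∫ x : E3, (pdv i (pdv j u) x k) * (pdv i (pdv j u) x l) * (pdv l u x k))|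
    ≤ 5 * (eLpNorm u p volume).toReal * (eLpNorm (grad2Norm u) (expA p) volume).toReal
        * (eLpNorm (grad3Norm u) 2 volume).toReal := by
  have := holderTriple_expA ((by norm_num : (2 : ℝ≥0∞) ≤ 3).trans hp.le)
  have sqrt_three_le : √(Fintype.card (Fin 3)) ≤ 2 := Real.sqrt_le_iff.2 (by norm_num)
  refine (trilinear_estimate_general (hsmooth.of_le (WithTop.coe_le_coe.2 le_top)) hsupp hdiv
    p (expA p) 2 2).trans ?_
  change _ * (eLpNorm (grad2Norm u) (expA p) volume).toReal
    * (eLpNorm (grad3Norm u) 2 volume).toReal ≤ _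
  gcongr
  linarith
end

section
/- (Logarithmic Gronwall lemma) Let y : [0,T] → [0,∞) be a C¹ (or absolutely continuous) function and f : [0,T] → [0,∞) an integrable function such that y'(t) ≤ f(t) · (1 + ln(e + y(t))) · y(t) for a.e. t ∈ [0,T]. Then for all t ∈ [0,T]: 1 + ln(e + y(t)) ≤ (1 + ln(e + y(0))) · exp( ∫₀ᵗ f(τ) dτ ). In particular, if ∫₀ᵀ f(τ) dτ < ∞ then y is bounded on [0,T]. -/
open MeasureTheory Real

/-!
The quantity `u = 1 + ln(e + y)` linearises the problem: since `y ≤ e + y`, the hypothesis gives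
`u' = y' / (e + y) ≤ f u`. As `u > 0`, this says `(ln u)' ≤ f`; integrate and exponentiate.
-/

section RightDerivative

variable {a b : ℝ} {f : ℝ → ℝ}

theorem sub_le_integral_of_hasDeriv_right_of_ae_le {g g' : ℝ → ℝ} (hab : a ≤ b)
    (hcont : ContinuousOn g (Set.Icc a b))
    (hderiv : ∀ t ∈ Set.Ioo a b, HasDerivWithinAt g (g' t) (Set.Ioi t) t)
    (hf : IntegrableOn f (Set.Icc a b))
    (hle : ∀ᵐ t, t ∈ Set.Ioo a b → g' t ≤ f t) :
    g b - g a ≤ ∫ t in a..b, f t := by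
  -- Replacing `f` by `max f g'` changes it only on a null set and makes the bound hold everywhere.
  have hmax_eq : ∀ᵐ t, t ∈ Set.Ioo a b → f t = max (f t) (g' t) :=
    hle.mono fun t h ht ↦ (max_eq_left (h ht)).symm
  have hmax_int : IntegrableOn (fun t ↦ max (f t) (g' t)) (Set.Icc a b) := by
    rw [integrableOn_Icc_iff_integrableOn_Ioo] at hf ⊢
    exact hf.congr_fun_ae ((ae_restrict_iff' measurableSet_Ioo).2 hmax_eq)
  calc
    g b - g a ≤ ∫ t in a..b, max (f t) (g' t) :=
      intervalIntegral.sub_le_integral_of_hasDeriv_right_of_le hab hcont hderiv hmax_int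
        fun t _ ↦ le_max_right (f t) (g' t)
    _ = ∫ t in a..b, f t := by
      simp only [intervalIntegral.integral_of_le hab, integral_Ioc_eq_integral_Ioo]
      exact (setIntegral_congr_ae measurableSet_Ioo hmax_eq).symm

theorem le_mul_exp_integral_of_hasDeriv_right_of_ae_le_mul {u u' : ℝ → ℝ} (hab : a ≤ b)
    (hpos : ∀ t ∈ Set.Icc a b, 0 < u t)
    (hcont : ContinuousOn u (Set.Icc a b))
    (hderiv : ∀ t ∈ Set.Ioo a b, HasDerivWithinAt u (u' t) (Set.Ioi t) t)
    (hf : IntegrableOn f (Set.Icc a b))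
    (hle : ∀ᵐ t, t ∈ Set.Ioo a b → u' t ≤ f t * u t) :
    u b ≤ u a * exp (∫ t in a..b, f t) := by
  have hpos' : ∀ t ∈ Set.Ioo a b, 0 < u t := fun t ht ↦ hpos t (Set.Ioo_subset_Icc_self ht)
  have hlog : log (u b) - log (u a) ≤ ∫ t in a..b, f t :=
    sub_le_integral_of_hasDeriv_right_of_ae_le hab
      (hcont.log fun t ht ↦ (hpos t ht).ne')
      (fun t ht ↦ (hderiv t ht).log (hpos' t ht).ne') hf
      (hle.mono fun t h ht ↦ (div_le_iff₀ (hpos' t ht)).2 (h ht))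
  have hua : 0 < u a := hpos a (Set.left_mem_Icc.2 hab)
  have hub : 0 < u b := hpos b (Set.right_mem_Icc.2 hab)
  calc
    u b = exp (log (u b)) := (exp_log hub).symm
    _ ≤ exp (log (u a) + ∫ t in a..b, f t) := exp_le_exp.2 (sub_le_iff_le_add'.1 hlog)
    _ = u a * exp (∫ t in a..b, f t) := by rw [exp_add, exp_log hua]

end RightDerivative

theorem div_add_le_of_le_mul {c k y y' : ℝ} (hc : 0 ≤ c) (hk : 0 ≤ k) (hcy : 0 < c + y)
    (h : y' ≤ k * y) : y' / (c + y) ≤ k :=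
  (div_le_iff₀ hcy).2 <| h.trans <| mul_le_mul_of_nonneg_left (le_add_of_nonneg_left hc) hk

theorem add_log_pos_of_exp_neg_lt {A x : ℝ} (hx : exp (-A) < x) : 0 < A + log x :=
  neg_lt_iff_pos_add'.1 <| (lt_log_iff_exp_lt ((exp_pos _).trans hx)).2 hx

theorem log_gronwall_general {a b A c : ℝ} {y y' f : ℝ → ℝ} (hc : 0 ≤ c)
    (hy : ∀ t ∈ Set.Icc a b, exp (-A) < c + y t)
    (hf_nonneg : ∀ᵐ t, t ∈ Set.Ioo a b → 0 ≤ f t)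
    (hf_int : IntegrableOn f (Set.Icc a b))
    (hy_cont : ContinuousOn y (Set.Icc a b))
    (hy_deriv : ∀ t ∈ Set.Ioo a b, HasDerivWithinAt y (y' t) (Set.Ioi t) t)
    (hy_ineq : ∀ᵐ t, t ∈ Set.Ioo a b → y' t ≤ f t * (A + log (c + y t)) * y t) :
    (∀ t ∈ Set.Icc a b,
      A + log (c + y t) ≤ (A + log (c + y a)) * exp (∫ τ in a..t, f τ)) ∧
    ∃ M : ℝ, ∀ t ∈ Set.Icc a b, y t ≤ M := by
  have hcy_pos : ∀ t ∈ Set.Icc a b, 0 < c + y t := fun t ht ↦ (exp_pos _).trans (hy t ht)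
  have hu_pos : ∀ t ∈ Set.Icc a b, 0 < A + log (c + y t) :=
    fun t ht ↦ add_log_pos_of_exp_neg_lt (hy t ht)
  have hu_cont : ContinuousOn (fun t ↦ A + log (c + y t)) (Set.Icc a b) :=
    continuousOn_const.add <| (continuousOn_const.add hy_cont).log fun t ht ↦ (hcy_pos t ht).ne'
  have hu_deriv : ∀ t ∈ Set.Ioo a b,
      HasDerivWithinAt (fun t ↦ A + log (c + y t)) (y' t / (c + y t)) (Set.Ioi t) t :=
    fun t ht ↦ (((hy_deriv t ht).const_add c).log
      (hcy_pos t (Set.Ioo_subset_Icc_self ht)).ne').const_add A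
  have hu_ineq : ∀ᵐ t, t ∈ Set.Ioo a b → y' t / (c + y t) ≤ f t * (A + log (c + y t)) := by
    filter_upwards [hf_nonneg, hy_ineq] with t hft hyt ht
    have ht' := Set.Ioo_subset_Icc_self ht
    exact div_add_le_of_le_mul hc (mul_nonneg (hft ht) (hu_pos t ht').le) (hcy_pos t ht') (hyt ht)
  refine ⟨fun t ht ↦ ?_, ?_⟩
  · have hIcc : Set.Icc a t ⊆ Set.Icc a b := Set.Icc_subset_Icc_right ht.2
    have hIoo : Set.Ioo a t ⊆ Set.Ioo a b := Set.Ioo_subset_Ioo_right ht.2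
    exact le_mul_exp_integral_of_hasDeriv_right_of_ae_le_mul ht.1
      (fun s hs ↦ hu_pos s (hIcc hs)) (hu_cont.mono hIcc) (fun s hs ↦ hu_deriv s (hIoo hs))
      (hf_int.mono_set hIcc) (hu_ineq.mono fun s h hs ↦ h (hIoo hs))
  · obtain ⟨M, hM⟩ := isCompact_Icc.bddAbove_image hy_cont
    exact ⟨M, fun t ht ↦ hM (Set.mem_image_of_mem y ht)⟩

/-- **Logarithmic Gronwall lemma.**
If `y : [0,T] → [0,∞)` is differentiable with derivative `y'`, `f : [0,T] → [0,∞)`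
is integrable, and `y'(t) ≤ f(t) (1 + ln(e + y(t))) y(t)` on `[0,T]`, then
`1 + ln(e + y(t)) ≤ (1 + ln(e + y(0))) exp(∫₀ᵗ f)` for all `t ∈ [0,T]`;
in particular `y` is bounded on `[0,T]`. -/
theorem log_gronwall
    (T : ℝ) (hT : 0 ≤ T)
    (y y' f : ℝ → ℝ)
    (hy_nonneg : ∀ t ∈ Set.Icc (0 : ℝ) T, 0 ≤ y t)
    (hf_nonneg : ∀ t ∈ Set.Icc (0 : ℝ) T, 0 ≤ f t)
    (hf_int : IntegrableOn f (Set.Icc 0 T) volume)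
    (hy_deriv : ∀ t ∈ Set.Icc (0 : ℝ) T, HasDerivAt y (y' t) t)
    (hy_ineq : ∀ t ∈ Set.Icc (0 : ℝ) T,
      y' t ≤ f t * (1 + Real.log (Real.exp 1 + y t)) * y t) :
    (∀ t ∈ Set.Icc (0 : ℝ) T,
      1 + Real.log (Real.exp 1 + y t)
        ≤ (1 + Real.log (Real.exp 1 + y 0)) * Real.exp (∫ τ in (0 : ℝ)..t, f τ)) ∧
    ∃ M : ℝ, ∀ t ∈ Set.Icc (0 : ℝ) T, y t ≤ M := by
  have hy : ∀ t ∈ Set.Icc 0 T, exp (-1) < exp 1 + y t := fun t ht ↦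
    (exp_lt_exp.2 (by norm_num)).trans_le (le_add_of_nonneg_right (hy_nonneg t ht))
  exact log_gronwall_general (exp_pos 1).le hy
    (.of_forall fun t ht ↦ hf_nonneg t (Set.Ioo_subset_Icc_self ht)) hf_int
    (fun t ht ↦ (hy_deriv t ht).continuousAt.continuousWithinAt)
    (fun t ht ↦ (hy_deriv t (Set.Ioo_subset_Icc_self ht)).hasDerivWithinAt)
    (.of_forall fun t ht ↦ hy_ineq t (Set.Ioo_subset_Icc_self ht))
end
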